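/- (Main theorem, positive direction.) Let n ≥ 2, a > 0, and let s_1 < ⋯ < s_n be the Chebyshev-type points on [0,a]. Let L̄_i be the Lagrange basis polynomials without intercept at the nodes s_1,…,s_n, let ω_{i,1} < ⋯ < ω_{i,n−1} be the roots of L̄_i′, and set A_j = (ω_{1,j−1}, ω_{n,j}), j = 1,…,n, with ω_{1,0} = −∞, ω_{n,n} = +∞. Fix z ∈ ⋃_{j=1}^n A_j and set ω_i(z) = |L̄_i′(z)| / Σ_{k=1}^n |L̄_k′(z)| and h(z) = Σ_{k=1}^n |L̄_k′(z)|. Then the design ξ*(z) supported at s_1,…,s_n with weights ω_1(z),…,ω_n(z) is c-optimal for c = f′(z) = (1, 2z, …, n z^{n−1})ᵀ: for every design η on [0,a] and every v ∈ ℝⁿ with M(η)v = f′(z), one has f′(z)ᵀv ≥ h(z)², and there exists v* with M(ξ*(z))v* = f′(z) and f′(z)ᵀv* = h(z)². -/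

import Mathlib

open Finset Matrix Real

/-- The Chebyshev-type points `s_i = a (cos((n−i)π/n) + cos(π/(2n))) / (1 + cos(π/(2n)))`,
`i = 1, …, n`; these satisfy `0 < s_1 < ⋯ < s_n = a`. -/
noncomputable def chebPt (n : ℕ) (a : ℝ) (i : ℕ) : ℝ :=
  a * (Real.cos (((n : ℝ) - (i : ℝ)) * π / n) + Real.cos (π / (2 * n))) /
    (1 + Real.cos (π / (2 * n)))

/-- The Lagrange basis polynomials without intercept for nodes `s_1, …, s_n`:
`L̄_i(z) = z ∏_{j≠i}(z − s_j) / (s_i ∏_{j≠i}(s_i − s_j))`. -/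
noncomputable def Lbar (n : ℕ) (s : ℕ → ℝ) (i : ℕ) (z : ℝ) : ℝ :=
  (z * ∏ j ∈ (Finset.Icc 1 n).erase i, (z - s j)) /
    (s i * ∏ j ∈ (Finset.Icc 1 n).erase i, (s i - s j))

/-- The optimal weights `ω_i(z) = |L̄_i′(z)| / Σ_{k=1}^n |L̄_k′(z)|`. -/
noncomputable def slopeWeight (n : ℕ) (s : ℕ → ℝ) (z : ℝ) (i : ℕ) : ℝ :=
  |deriv (Lbar n s i) z| / ∑ k ∈ Finset.Icc 1 n, |deriv (Lbar n s k) z|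

/-- `h(z) = Σ_{k=1}^n |L̄_k′(z)|`. -/
noncomputable def slopeH (n : ℕ) (s : ℕ → ℝ) (z : ℝ) : ℝ :=
  ∑ k ∈ Finset.Icc 1 n, |deriv (Lbar n s k) z|

/-- The regression vector `f(x) = (x, x², …, xⁿ)ᵀ` of the degree-`n` polynomial model
without intercept. -/
def modelVec (n : ℕ) (x : ℝ) : Fin n → ℝ := fun i => x ^ (i.1 + 1)

/-- An approximate design on `[0, a]`: a probability measure with finite support
`x_1, …, x_m ⊆ [0, a]` and weights `ω_1, …, ω_m`. -/
structure Design (n : ℕ) (a : ℝ) where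
  m : ℕ
  pts : Fin m → ℝ
  wts : Fin m → ℝ
  pts_mem : ∀ i, pts i ∈ Set.Icc (0 : ℝ) a
  wts_nonneg : ∀ i, 0 ≤ wts i
  wts_sum : ∑ i, wts i = 1

/-- The information matrix `M(ξ) = Σᵢ ωᵢ f(xᵢ) f(xᵢ)ᵀ` of a design. -/
noncomputable def infoMatrix {n : ℕ} {a : ℝ} (ξ : Design n a) :
    Matrix (Fin n) (Fin n) ℝ :=
  ∑ i, ξ.wts i • Matrix.vecMulVec (modelVec n (ξ.pts i)) (modelVec n (ξ.pts i))

/-!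
A polynomial `p` of degree at most `n` with `p 0 = 0` and `|p| ≤ 1` on `[0, a]` gives, by the
Cauchy–Schwarz inequality, the lower bound `(p' z) ^ 2` for the variance of every design. The
interpolation formula `p' z = ∑ p (s i) * L̄ᵢ' z` turns this bound into `h z ^ 2` as soon as
`p (s i)` is the sign of `L̄ᵢ' z` for all `i`, and then the weights `|L̄ᵢ' z| / h z` attain it.

The Chebyshev polynomial `T_n`, rescaled so that its smallest root goes to `0` and `1` to `a`,
has the values `±1` with alternating signs at the points `s i`, so it remains to see that the signs
of `L̄ᵢ' z` alternate. Let `W` be the monic polynomial with roots `0, s 1, …, s n` and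
`P i = W / (X - s i)`, a multiple of `L̄ᵢ`. The Laguerre inequality `P * P'' < P' ^ 2` shows that
the `k`-th critical point of `P n` lies to the left of that of `P 1`; hence `P 1` and `P n` have
derivatives of the same sign at every `z ∈ A_j`. Since
`(P i)' z * (z - s i) ^ 2 = W' z * (z - s i) - W z` is affine in `s i`, the derivatives of all
intermediate `P i` have this sign too, and the signs of the normalizing constants alternate.
-/

section RootEnumeration

open Polynomial

/-- `α 1 < ⋯ < α m`, where `m = q.natDegree`, are roots of `q`: for `q ≠ 0` these are all of its
roots, each of them simple. The values of `α` outside `{1, …, m}` are irrelevant. -/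
structure EnumeratesRoots {K : Type*} [Semiring K] [Preorder K] (q : K[X]) (α : ℕ → K) :
    Prop where
  strictMonoOn : StrictMonoOn α (Set.Icc 1 q.natDegree)
  isRoot : ∀ k ∈ Finset.Icc 1 q.natDegree, q.IsRoot (α k)

theorem eq_C_leadingCoeff_mul_nodal {F ι : Type*} [Field F] {p : F[X]} {S : Finset ι}
    {v : ι → F} (hv : Set.InjOn v S) (hp : p.natDegree = #S) (hroot : ∀ i ∈ S, p.IsRoot (v i)) :
    p = C p.leadingCoeff * Lagrange.nodal S v := by
  rcases eq_or_ne p 0 with rfl | hp0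
  · simp
  have hlc : p.leadingCoeff ≠ 0 := leadingCoeff_ne_zero.mpr hp0
  refine eq_of_degree_le_of_eval_index_eq S hv (degree_le_of_natDegree_le hp.le) ?_ ?_ ?_
  · rw [degree_C_mul hlc, Lagrange.degree_nodal, degree_eq_natDegree hp0, hp]
  · rw [leadingCoeff_mul, leadingCoeff_C, Lagrange.nodal_monic.leadingCoeff, mul_one]
  · intro i hi
    rw [eval_mul, Lagrange.eval_nodal_at_node hi, mul_zero, hroot i hi]

theorem EnumeratesRoots.eq_C_leadingCoeff_mul_nodal {K : Type*} [Field K] [Preorder K] {q : K[X]}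
    {α : ℕ → K} (h : EnumeratesRoots q α) :
    q = C q.leadingCoeff * Lagrange.nodal (Finset.Icc 1 q.natDegree) α := by
  refine _root_.eq_C_leadingCoeff_mul_nodal ?_ (by simp) h.isRoot
  rw [Finset.coe_Icc]
  exact h.strictMonoOn.injOn

variable {K : Type*} [Field K] [LinearOrder K] [IsStrictOrderedRing K]

theorem neg_one_pow_card_filter_mul_prod_pos {ι : Type*} (S : Finset ι) (p : ι → Prop)
    [DecidablePred p] {f : ι → K} (hneg : ∀ i ∈ S, p i → f i < 0)
    (hpos : ∀ i ∈ S, ¬p i → 0 < f i) :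
    0 < (-1) ^ #{i ∈ S | p i} * ∏ i ∈ S, f i := by
  have hsign : (-1 : K) ^ #{i ∈ S | p i} = ∏ i ∈ S, if p i then -1 else 1 := by
    rw [Finset.prod_ite, Finset.prod_const, Finset.prod_const_one, mul_one]
  rw [hsign, ← Finset.prod_mul_distrib]
  refine Finset.prod_pos fun i hi => ?_
  split_ifs with h
  · linarith [hneg i hi h]
  · linarith [hpos i hi h]

theorem neg_one_pow_card_filter_lt_mul_eval_nodal_erase_pos {ι : Type*} [LinearOrder ι]
    {S : Finset ι} {v : ι → K} (hv : StrictMonoOn v S) {i : ι} (hi : i ∈ S) :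
    0 < (-1) ^ #{l ∈ S | i < l} * (Lagrange.nodal (S.erase i) v).eval (v i) := by
  have hfilter : {l ∈ S | i < l} = {l ∈ S.erase i | i < l} := by grind
  rw [hfilter, Lagrange.eval_nodal]
  refine neg_one_pow_card_filter_mul_prod_pos _ _ (fun l hl hil => ?_) fun l hl hil => ?_
  · exact sub_neg.mpr (hv hi (Finset.mem_of_mem_erase hl) hil)
  · have hli : l < i := (not_lt.mp hil).lt_of_ne (Finset.ne_of_mem_erase hl)
    exact sub_pos.mpr (hv (Finset.mem_of_mem_erase hl) hi hli)

namespace EnumeratesRoots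

variable {p q : K[X]} {α β : ℕ → K}

theorem neg_one_pow_mul_eval_pos (h : EnumeratesRoots q α) (hlc : 0 < q.leadingCoeff) {j : ℕ}
    (hj : j ∈ Finset.Icc 1 (q.natDegree + 1)) {x : K} (hleft : 1 < j → α (j - 1) < x)
    (hright : j ≤ q.natDegree → x < α j) :
    0 < (-1) ^ (q.natDegree + 1 - j) * q.eval x := by
  rw [Finset.mem_Icc] at hj
  have hcard : #{l ∈ Finset.Icc 1 q.natDegree | j ≤ l} = q.natDegree + 1 - j := by
    rw [← Nat.card_Icc]
    congr 1
    grind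
  have hprod : 0 < (-1) ^ #{l ∈ Finset.Icc 1 q.natDegree | j ≤ l} *
      ∏ l ∈ Finset.Icc 1 q.natDegree, (x - α l) := by
    refine neg_one_pow_card_filter_mul_prod_pos _ _ (fun l hl hjl => ?_) fun l hl hjl => ?_ <;>
      rw [Finset.mem_Icc] at hl
    · have hαj : α j ≤ α l := h.strictMonoOn.monotoneOn ⟨hj.1, hjl.trans hl.2⟩ hl hjl
      linarith [hright (hjl.trans hl.2)]
    · have hαl : α l ≤ α (j - 1) :=
        h.strictMonoOn.monotoneOn hl ⟨by omega, by omega⟩ (by omega)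
      linarith [hleft (by omega)]
  have heval : q.eval x = q.leadingCoeff * ∏ l ∈ Finset.Icc 1 q.natDegree, (x - α l) := by
    conv_lhs => rw [h.eq_C_leadingCoeff_mul_nodal, eval_C_mul, Lagrange.eval_nodal]
  rw [heval, ← hcard, mul_left_comm]
  exact mul_pos hlc hprod

theorem neg_one_pow_mul_eval_derivative_pos (h : EnumeratesRoots q α) (hlc : 0 < q.leadingCoeff)
    {k : ℕ} (hk : k ∈ Finset.Icc 1 q.natDegree) :
    0 < (-1) ^ (q.natDegree - k) * q.derivative.eval (α k) := by
  have hcard : #{l ∈ Finset.Icc 1 q.natDegree | k < l} = q.natDegree - k := by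
    rw [← Nat.card_Ioc]
    congr 1
    grind
  have hpos := neg_one_pow_card_filter_lt_mul_eval_nodal_erase_pos (v := α)
    (by rw [Finset.coe_Icc]; exact h.strictMonoOn) hk
  have heval : q.derivative.eval (α k) =
      q.leadingCoeff * (Lagrange.nodal ((Finset.Icc 1 q.natDegree).erase k) α).eval (α k) := by
    conv_lhs => rw [h.eq_C_leadingCoeff_mul_nodal, derivative_C_mul, eval_C_mul,
      Lagrange.eval_nodal_derivative_eval_node_eq hk]
  rw [heval, ← hcard, mul_left_comm]
  exact mul_pos hlc hpos

/- Downward induction on `k`: if `β k < α k`, then `α k` lies between `β k` and `β (k + 1)`, so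
`q (α k)` and `p' (α k)` both have the sign `(-1) ^ (m - k)`. -/
theorem lt_of_eval_derivative_mul_eval_neg (hp : EnumeratesRoots p α) (hq : EnumeratesRoots q β)
    (hdeg : p.natDegree = q.natDegree) (hplc : 0 < p.leadingCoeff) (hqlc : 0 < q.leadingCoeff)
    (hneg : ∀ k ∈ Finset.Icc 1 p.natDegree, p.derivative.eval (α k) * q.eval (α k) < 0) :
    ∀ k ∈ Finset.Icc 1 p.natDegree, α k < β k := by
  intro k hk
  rw [Finset.mem_Icc] at hk
  refine Nat.decreasingInduction' (P := fun l => l ≤ p.natDegree → α l < β l)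
    (n := p.natDegree + 1) (fun l _ hkl ih hl => ?_) (by omega) (fun h => by omega) hk.2
  have hlmem : l ∈ Finset.Icc 1 p.natDegree := Finset.mem_Icc.mpr ⟨hk.1.trans hkl, hl⟩
  have hl1 : 1 ≤ l := hk.1.trans hkl
  by_contra! hβα
  rcases hβα.eq_or_lt with heq | hlt
  · have hroot : q.eval (α l) = 0 := heq ▸ hq.isRoot l (hdeg ▸ hlmem)
    simpa only [hroot, mul_zero, lt_self_iff_false] using hneg l hlmem
  · have hp' := hp.neg_one_pow_mul_eval_derivative_pos hplc hlmem
    have hq' : 0 < (-1) ^ (q.natDegree + 1 - (l + 1)) * q.eval (α l) := by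
      refine hq.neg_one_pow_mul_eval_pos hqlc (by grind) (fun _ => hlt) fun hl' => ?_
      exact (hp.strictMonoOn ⟨hl1, hl⟩ ⟨by omega, by omega⟩ l.lt_succ_self).trans (ih (by omega))
    rw [Nat.add_sub_add_right, ← hdeg] at hq'
    have hprod := mul_pos hp' hq'
    rw [mul_mul_mul_comm, pow_mul_pow_eq_one _ (by norm_num), one_mul] at hprod
    exact hprod.not_gt (hneg l hlmem)

end EnumeratesRoots

end RootEnumeration

section NodalCriticalPoints

open Polynomial Lagrange

theorem eval_derivative_nodal_erase_mul_add {R ι : Type*} [CommRing R] [DecidableEq ι]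
    {T : Finset ι} {v : ι → R} {i : ι} (hi : i ∈ T) (x : R) :
    (nodal (T.erase i) v).derivative.eval x * (x - v i) + (nodal (T.erase i) v).eval x =
      (nodal T v).derivative.eval x := by
  rw [nodal_eq_mul_nodal_erase hi, derivative_mul, derivative_X_sub_C]
  simp only [eval_add, eval_mul, eval_sub, eval_X, eval_C, eval_one]
  ring

theorem eval_derivative_nodal_erase_mul_sq {R ι : Type*} [CommRing R] [DecidableEq ι]
    {T : Finset ι} {v : ι → R} {i : ι} (hi : i ∈ T) (x : R) :
    (nodal (T.erase i) v).derivative.eval x * (x - v i) ^ 2 =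
      (nodal T v).derivative.eval x * (x - v i) - (nodal T v).eval x := by
  have hmul : (nodal T v).eval x = (x - v i) * (nodal (T.erase i) v).eval x := by
    rw [nodal_eq_mul_nodal_erase hi, eval_mul, eval_sub, eval_X, eval_C]
  linear_combination (x - v i) * eval_derivative_nodal_erase_mul_add hi x + hmul

variable {K ι : Type*} [Field K] [LinearOrder K] [IsStrictOrderedRing K]

theorem eval_nodal_mul_eval_derivative_derivative_lt {S : Finset ι} (hS : S.Nonempty) {v : ι → K}
    (hv : Set.InjOn v S) (x : K) :
    (nodal S v).eval x * (nodal S v).derivative.derivative.eval x <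
      (nodal S v).derivative.eval x ^ 2 := by
  classical
  induction hS using Finset.Nonempty.cons_induction with
  | singleton r => simp [nodal]
  | cons r S hr _ ih =>
    rw [Finset.coe_cons] at hv
    have ih := ih (hv.mono (Set.subset_insert _ _))
    rw [Finset.cons_eq_insert, nodal_insert_eq_nodal hr]
    set P := nodal S v
    have hsplit : ((X - C (v r)) * P).derivative.eval x ^ 2 -
        ((X - C (v r)) * P).eval x * ((X - C (v r)) * P).derivative.derivative.eval x =
        P.eval x ^ 2 + (x - v r) ^ 2 *
          (P.derivative.eval x ^ 2 - P.eval x * P.derivative.derivative.eval x) := by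
      simp only [derivative_mul, derivative_add, derivative_sub, derivative_X, derivative_C,
        derivative_one, derivative_zero, eval_add, eval_mul, eval_sub, eval_X, eval_C, eval_one,
        eval_zero]
      ring
    rw [← sub_pos, hsplit]
    rcases eq_or_ne x (v r) with rfl | hx
    · have hPr : P.eval (v r) ≠ 0 := eval_nodal_not_at_node fun l hl hrl =>
        hr (hv (Set.mem_insert _ _) (Set.mem_insert_of_mem _ hl) hrl ▸ hl)
      rw [sub_self, zero_pow two_ne_zero, zero_mul, add_zero]
      positivity
    · exact add_pos_of_nonneg_of_pos (sq_nonneg _)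
        (mul_pos (sq_pos_of_ne_zero (sub_ne_zero.mpr hx)) (sub_pos.mpr ih))

theorem leadingCoeff_derivative_nodal_pos {S : Finset ι} (hS : S.Nonempty) (v : ι → K) :
    0 < (nodal S v).derivative.leadingCoeff := by
  rw [leadingCoeff_derivative, nodal_monic.leadingCoeff, one_mul, natDegree_nodal]
  exact_mod_cast hS.card_pos

variable [DecidableEq ι] {T : Finset ι} {v : ι → K} {i k : ι}

/- By `eval_derivative_nodal_erase_mul_sq`, `(nodal (T.erase r) v)' x * (x - v r) ^ 2` is an affine
function of `v r`. -/
theorem eval_derivative_nodal_erase_pos_of_between {l : ι} (hi : i ∈ T) (hl : l ∈ T) (hk : k ∈ T)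
    (hil : v i < v l) (hlk : v l < v k) {ε x : K}
    (hipos : 0 < ε * (nodal (T.erase i) v).derivative.eval x)
    (hkpos : 0 < ε * (nodal (T.erase k) v).derivative.eval x) :
    0 < ε * (nodal (T.erase l) v).derivative.eval x := by
  have haffine : ε * (nodal (T.erase l) v).derivative.eval x * ((x - v l) ^ 2 * (v k - v i)) =
      ε * (nodal (T.erase i) v).derivative.eval x * ((x - v i) ^ 2 * (v k - v l)) +
        ε * (nodal (T.erase k) v).derivative.eval x * ((x - v k) ^ 2 * (v l - v i)) := by
    linear_combination ε * (v k - v i) * eval_derivative_nodal_erase_mul_sq hl x -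
      ε * (v k - v l) * eval_derivative_nodal_erase_mul_sq hi x -
      ε * (v l - v i) * eval_derivative_nodal_erase_mul_sq hk x
  have hkl := sub_pos.mpr hlk
  have hli := sub_pos.mpr hil
  have hki := sub_pos.mpr (hil.trans hlk)
  refine pos_of_mul_pos_left (b := (x - v l) ^ 2 * (v k - v i)) ?_ (by positivity)
  rw [haffine]
  rcases eq_or_ne x (v i) with rfl | hxi
  · have hx := pow_pos hki 2
    rw [← neg_sub, neg_sq] at hx
    exact add_pos_of_nonneg_of_pos (mul_nonneg hipos.le (mul_nonneg (sq_nonneg _) hkl.le))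
      (mul_pos hkpos (mul_pos hx hli))
  · have hx := sq_pos_of_ne_zero (sub_ne_zero.mpr hxi)
    exact add_pos_of_pos_of_nonneg (mul_pos hipos (mul_pos hx hkl))
      (mul_nonneg hkpos.le (mul_nonneg (sq_nonneg _) hli.le))

theorem natDegree_derivative_nodal_erase (hi : i ∈ T) :
    (nodal (T.erase i) v).derivative.natDegree = #T - 2 := by
  rw [natDegree_derivative, natDegree_nodal, Finset.card_erase_of_mem hi, Nat.sub_sub]

/- At a critical point `y` of `nodal (T.erase k) v` one has
`(nodal (T.erase i) v)' y * (y - v i) ^ 2 = (nodal (T.erase k) v) y * (v k - v i)`. -/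
theorem criticalPoint_nodal_erase_lt (hv : Set.InjOn v T) (hi : i ∈ T) (hk : k ∈ T)
    (hik : v i < v k) {α β : ℕ → K}
    (hα : EnumeratesRoots (nodal (T.erase k) v).derivative α)
    (hβ : EnumeratesRoots (nodal (T.erase i) v).derivative β) :
    ∀ l ∈ Finset.Icc 1 (#T - 2), α l < β l := by
  have hne : i ≠ k := ne_of_apply_ne v hik.ne
  have hk' : (T.erase k).Nonempty := ⟨i, Finset.mem_erase.mpr ⟨hne, hi⟩⟩
  have hi' : (T.erase i).Nonempty := ⟨k, Finset.mem_erase.mpr ⟨hne.symm, hk⟩⟩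
  rw [← natDegree_derivative_nodal_erase (v := v) hk]
  refine hα.lt_of_eval_derivative_mul_eval_neg hβ ?_ (leadingCoeff_derivative_nodal_pos hk' v)
    (leadingCoeff_derivative_nodal_pos hi' v) fun l hl => ?_
  · rw [natDegree_derivative_nodal_erase hi, natDegree_derivative_nodal_erase hk]
  have hcrit : (nodal (T.erase k) v).derivative.eval (α l) = 0 := hα.isRoot l hl
  have hβ_eval : (nodal (T.erase i) v).derivative.eval (α l) * (α l - v i) ^ 2 =
      (nodal (T.erase k) v).eval (α l) * (v k - v i) := by
    linear_combination eval_derivative_nodal_erase_mul_sq hi (α l) -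
      eval_derivative_nodal_erase_mul_sq hk (α l) -
      (v k - v i) * eval_derivative_nodal_erase_mul_add hk (α l) +
      (α l - v k) * (α l - v i) * hcrit
  have hlaguerre : (nodal (T.erase k) v).eval (α l) *
      (nodal (T.erase k) v).derivative.derivative.eval (α l) < 0 := by
    simpa only [hcrit, zero_pow two_ne_zero] using
      eval_nodal_mul_eval_derivative_derivative_lt hk' (hv.mono (Finset.erase_subset k T)) (α l)
  refine neg_of_mul_neg_left (b := (α l - v i) ^ 2) ?_ (sq_nonneg _)
  rw [mul_assoc, hβ_eval, ← mul_assoc, mul_comm (eval _ _) (eval _ _)]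
  exact mul_neg_of_neg_of_pos hlaguerre (sub_pos.mpr hik)

theorem neg_one_pow_mul_eval_derivative_nodal_erase_pos (hv : Set.InjOn v T) (hi : i ∈ T)
    (hk : k ∈ T) (hik : v i < v k) {α β : ℕ → K}
    (hα : EnumeratesRoots (nodal (T.erase k) v).derivative α)
    (hβ : EnumeratesRoots (nodal (T.erase i) v).derivative β) {j : ℕ}
    (hj : j ∈ Finset.Icc 1 (#T - 1)) {x : K} (hleft : 1 < j → β (j - 1) < x)
    (hright : j < #T - 1 → x < α j) {l : ι} (hl : l ∈ T) (hil : v i ≤ v l) (hlk : v l ≤ v k) :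
    0 < (-1) ^ (#T - 1 - j) * (nodal (T.erase l) v).derivative.eval x := by
  have hne : i ≠ k := ne_of_apply_ne v hik.ne
  have hcard : 1 < #T := Finset.one_lt_card.mpr ⟨i, hi, k, hk, hne⟩
  have hlt := criticalPoint_nodal_erase_lt hv hi hk hik hα hβ
  rw [Finset.mem_Icc] at hj
  have hsign : ∀ r ∈ T, ∀ γ, EnumeratesRoots (nodal (T.erase r) v).derivative γ →
      (T.erase r).Nonempty → (1 < j → γ (j - 1) < x) → (j < #T - 1 → x < γ j) →
      0 < (-1) ^ (#T - 1 - j) * (nodal (T.erase r) v).derivative.eval x := by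
    intro r hr γ hγ hr_nonempty hγx hxγ
    have hdeg := natDegree_derivative_nodal_erase (v := v) hr
    have := hγ.neg_one_pow_mul_eval_pos (leadingCoeff_derivative_nodal_pos hr_nonempty v) (j := j)
      (Finset.mem_Icc.mpr ⟨hj.1, by omega⟩) hγx fun h => hxγ (by omega)
    rwa [hdeg, show #T - 2 + 1 - j = #T - 1 - j by omega] at this
  have hipos := hsign i hi β hβ ⟨k, Finset.mem_erase.mpr ⟨hne.symm, hk⟩⟩ hleft fun h =>
    (hright h).trans (hlt j (Finset.mem_Icc.mpr ⟨hj.1, by omega⟩))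
  have hkpos := hsign k hk α hα ⟨i, Finset.mem_erase.mpr ⟨hne, hi⟩⟩
    (fun h => (hlt (j - 1) (Finset.mem_Icc.mpr (by omega))).trans (hleft h)) hright
  rcases hil.eq_or_lt with heq | hil
  · rwa [← hv hi hl heq]
  rcases hlk.eq_or_lt with heq | hlk
  · rwa [hv hl hk heq]
  exact eval_derivative_nodal_erase_pos_of_between hi hl hk hil hlk hipos hkpos

end NodalCriticalPoints

section LagrangeBasis

open Polynomial Lagrange

theorem coe_sign_eq_neg_one_pow {K : Type*} [Ring K] [LinearOrder K] [IsStrictOrderedRing K]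
    {x : K} {m : ℕ} (h : 0 < (-1) ^ m * x) : (SignType.sign x : K) = (-1) ^ m := by
  rcases neg_one_pow_eq_or K m with hm | hm <;> rw [hm] at h ⊢
  · rw [sign_pos (by simpa only [one_mul] using h), SignType.coe_one]
  · rw [sign_neg (by simpa only [neg_one_mul, neg_pos] using h), SignType.coe_neg_one]

theorem basis_eq_C_nodalWeight_mul_nodal_erase {F ι : Type*} [Field F] [DecidableEq ι]
    {T : Finset ι} {v : ι → F} {i : ι} (hi : i ∈ T) :
    Lagrange.basis T v i = C (nodalWeight T v i) * nodal (T.erase i) v := by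
  rw [basis_eq_prod_sub_inv_mul_nodal_div hi, nodal_erase_eq_nodal_div hi]

theorem neg_one_pow_mul_eval_derivative_basis_pos {K ι : Type*} [Field K] [LinearOrder K]
    [IsStrictOrderedRing K] [LinearOrder ι] {T : Finset ι} {v : ι → K} (hv : StrictMonoOn v T)
    {i k : ι} (hi : i ∈ T) (hk : k ∈ T) (hik : i < k) {α β : ℕ → K}
    (hα : EnumeratesRoots (nodal (T.erase k) v).derivative α)
    (hβ : EnumeratesRoots (nodal (T.erase i) v).derivative β) {j : ℕ}
    (hj : j ∈ Finset.Icc 1 (#T - 1)) {x : K} (hleft : 1 < j → β (j - 1) < x)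
    (hright : j < #T - 1 → x < α j) {l : ι} (hl : l ∈ T) (hil : i ≤ l) (hlk : l ≤ k) :
    0 < (-1) ^ (#T - 1 - j + #{r ∈ T | l < r}) * (Lagrange.basis T v l).derivative.eval x := by
  have hnodal := neg_one_pow_mul_eval_derivative_nodal_erase_pos hv.injOn hi hk (hv hi hk hik)
    hα hβ hj hleft hright hl (hv.monotoneOn hi hl hil) (hv.monotoneOn hl hk hlk)
  have hweight : 0 < (-1) ^ #{r ∈ T | l < r} * nodalWeight T v l := by
    rw [nodalWeight_eq_eval_nodal_erase_inv, ← inv_pos, mul_inv, inv_inv, ← inv_pow, inv_neg_one]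
    exact neg_one_pow_card_filter_lt_mul_eval_nodal_erase_pos hv hl
  rw [basis_eq_C_nodalWeight_mul_nodal_erase hl, derivative_C_mul, eval_C_mul, pow_add,
    mul_comm (nodalWeight T v l), mul_mul_mul_comm]
  exact mul_pos hnodal hweight

theorem Lbar_eq_eval_basis {n : ℕ} (s : ℕ → ℝ) {i : ℕ} (hi : i ∈ Finset.Icc 1 n) (x : ℝ) :
    Lbar n s i x = (Lagrange.basis (Finset.Iic n) (Function.update s 0 0) i).eval x := by
  have herase : (Finset.Iic n).erase i = insert 0 ((Finset.Icc 1 n).erase i) := by grind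
  have hi0 : i ≠ 0 := by grind
  have hnodal : ∀ y, (nodal ((Finset.Iic n).erase i) (Function.update s 0 0)).eval y =
      y * ∏ j ∈ (Finset.Icc 1 n).erase i, (y - s j) := fun y => by
    rw [herase, eval_nodal, Finset.prod_insert (by simp), Function.update_self, sub_zero]
    congr 1
    exact Finset.prod_congr rfl fun j hj => by rw [Function.update_of_ne (by grind)]
  rw [basis_eq_C_nodalWeight_mul_nodal_erase (Finset.mem_Iic.mpr (Finset.mem_Icc.mp hi).2),
    eval_C_mul, nodalWeight_eq_eval_nodal_erase_inv, hnodal, hnodal, Function.update_of_ne hi0,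
    inv_mul_eq_div, Lbar]

theorem deriv_Lbar {n : ℕ} (s : ℕ → ℝ) {i : ℕ} (hi : i ∈ Finset.Icc 1 n) (x : ℝ) :
    deriv (Lbar n s i) x =
      (Lagrange.basis (Finset.Iic n) (Function.update s 0 0) i).derivative.eval x := by
  rw [funext (Lbar_eq_eval_basis s hi), Polynomial.deriv]

theorem EnumeratesRoots.of_deriv_Lbar_eq_zero {n : ℕ} {s : ℕ → ℝ}
    (hs : Set.InjOn (Function.update s 0 0) (Set.Iic n)) {i : ℕ} (hi : i ∈ Finset.Icc 1 n)
    {α : ℕ → ℝ} (hα : StrictMonoOn α (Set.Icc 1 (n - 1)))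
    (hroot : ∀ k ∈ Finset.Icc 1 (n - 1), deriv (Lbar n s i) (α k) = 0) :
    EnumeratesRoots (nodal ((Finset.Iic n).erase i) (Function.update s 0 0)).derivative α := by
  have hiT : i ∈ Finset.Iic n := Finset.mem_Iic.mpr (Finset.mem_Icc.mp hi).2
  have hdeg : (nodal ((Finset.Iic n).erase i) (Function.update s 0 0)).derivative.natDegree =
      n - 1 := by
    rw [natDegree_derivative_nodal_erase hiT, Nat.card_Iic, Nat.add_sub_add_right]
  refine ⟨hdeg ▸ hα, fun k hk => ?_⟩
  have := hroot k (hdeg ▸ hk)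
  rw [deriv_Lbar s hi, basis_eq_C_nodalWeight_mul_nodal_erase hiT, derivative_C_mul,
    eval_C_mul] at this
  rw [← Finset.coe_Iic] at hs
  exact (mul_eq_zero.mp this).resolve_left (nodalWeight_ne_zero hs hiT)

theorem sign_deriv_Lbar {n : ℕ} (hn : 1 < n) {s : ℕ → ℝ}
    (hs : StrictMonoOn (Function.update s 0 0) (Set.Iic n)) {α β : ℕ → ℝ}
    (hα : EnumeratesRoots
      (nodal ((Finset.Iic n).erase n) (Function.update s 0 0)).derivative α)
    (hβ : EnumeratesRoots
      (nodal ((Finset.Iic n).erase 1) (Function.update s 0 0)).derivative β)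
    {j : ℕ} (hj : j ∈ Finset.Icc 1 n) {z : ℝ} (hleft : 1 < j → β (j - 1) < z)
    (hright : j < n → z < α j) {i : ℕ} (hi : i ∈ Finset.Icc 1 n) :
    (SignType.sign (deriv (Lbar n s i) z) : ℝ) = (-1) ^ (n - j + (n - i)) := by
  have hcard : #{r ∈ Finset.Iic n | i < r} = n - i := by
    rw [← Nat.card_Ioc]
    congr 1
    grind
  have hv : StrictMonoOn (Function.update s 0 0) (Finset.Iic n) := by rwa [Finset.coe_Iic]
  have hT : #(Finset.Iic n) - 1 = n := by rw [Nat.card_Iic, Nat.add_sub_cancel]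
  have hpos := neg_one_pow_mul_eval_derivative_basis_pos hv (Finset.mem_Iic.mpr hn.le)
    (Finset.mem_Iic.mpr le_rfl) hn hα hβ (by rwa [hT]) hleft (by rwa [hT])
    (Finset.mem_Iic.mpr (Finset.mem_Icc.mp hi).2) (Finset.mem_Icc.mp hi).1 (Finset.mem_Icc.mp hi).2
  rw [hT, hcard, ← deriv_Lbar s hi] at hpos
  exact coe_sign_eq_neg_one_pow hpos

theorem eval_derivative_eq_sum_mul_deriv_Lbar {n : ℕ} {s : ℕ → ℝ}
    (hs : Set.InjOn (Function.update s 0 0) (Set.Iic n)) {p : ℝ[X]} (hp : p.natDegree ≤ n)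
    (hp0 : p.eval 0 = 0) (z : ℝ) :
    p.derivative.eval z = ∑ i ∈ Finset.Icc 1 n, p.eval (s i) * deriv (Lbar n s i) z := by
  rw [← Finset.coe_Iic] at hs
  have hdeg : p.degree < #(Finset.Iic n) := by
    rw [Nat.card_Iic]
    exact degree_le_natDegree.trans_lt (by exact_mod_cast Nat.lt_succ_of_le hp)
  have hIic : Finset.Iic n = insert 0 (Finset.Icc 1 n) := by grind
  conv_lhs => rw [eq_interpolate hs hdeg, interpolate_apply]
  simp only [derivative_sum, derivative_C_mul, eval_finsetSum, eval_C_mul]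
  conv_lhs => rw [hIic, Finset.sum_insert (by simp), Function.update_self, hp0, zero_mul, zero_add]
  refine Finset.sum_congr rfl fun i hi => ?_
  rw [Function.update_of_ne (by grind), ← hIic, deriv_Lbar s hi]

theorem sum_deriv_Lbar_smul_modelVec {n : ℕ} {s : ℕ → ℝ}
    (hs : Set.InjOn (Function.update s 0 0) (Set.Iic n)) (z : ℝ) :
    ∑ i ∈ Finset.Icc 1 n, deriv (Lbar n s i) z • modelVec n (s i) =
      fun k : Fin n => ((k.1 : ℝ) + 1) * z ^ k.1 := by
  ext k
  have hmonomial := eval_derivative_eq_sum_mul_deriv_Lbar hs (p := X ^ (k.1 + 1))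
    (by rw [natDegree_X_pow]; exact k.2) (by simp) z
  simp only [derivative_X_pow, eval_mul, eval_C, eval_pow, eval_X, Nat.cast_add, Nat.cast_one,
    Nat.add_sub_cancel] at hmonomial
  simp only [Finset.sum_apply, Pi.smul_apply, smul_eq_mul, modelVec, hmonomial, mul_comm]

end LagrangeBasis

section ChebyshevPoints

open Polynomial

theorem cos_pi_div_two_mul_nonneg (n : ℕ) : 0 ≤ cos (π / (2 * n)) := by
  rcases n.eq_zero_or_pos with rfl | hn
  · simp
  have hn1 : (1 : ℝ) ≤ n := by exact_mod_cast hn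
  refine cos_nonneg_of_mem_Icc ⟨?_, ?_⟩
  · have := pi_pos
    exact (neg_nonpos.mpr (by positivity)).trans (by positivity)
  · exact div_le_div_of_nonneg_left pi_pos.le two_pos (by linarith)

theorem chebPt_eq_node {n i : ℕ} (hi : i ≤ n) (a : ℝ) :
    chebPt n a i =
      a * (Chebyshev.node n (n - i) + cos (π / (2 * n))) / (1 + cos (π / (2 * n))) := by
  rw [chebPt, Chebyshev.node, Nat.cast_sub hi]

theorem chebPt_lt_chebPt {n i k : ℕ} (hik : i < k) (hk : k ≤ n) {a : ℝ} (ha : 0 < a) :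
    chebPt n a i < chebPt n a k := by
  have hc := cos_pi_div_two_mul_nonneg n
  rw [chebPt_eq_node (hik.le.trans hk), chebPt_eq_node hk]
  gcongr
  exact Chebyshev.node_lt (by omega) (by omega)

theorem chebPt_pos {n i : ℕ} (hi : i ∈ Finset.Icc 1 n) {a : ℝ} (ha : 0 < a) :
    0 < chebPt n a i := by
  rw [Finset.mem_Icc] at hi
  have hi1 : (1 : ℝ) ≤ i := by exact_mod_cast hi.1
  have hin : (i : ℝ) ≤ n := by exact_mod_cast hi.2
  have hn : (0 : ℝ) < n := by linarith
  have hstep : 0 < π / (2 * n) := by positivity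
  have hcos : cos (π - π / (2 * n)) < cos ((n - i) * π / n) := by
    refine cos_lt_cos_of_nonneg_of_le_pi
      (div_nonneg (mul_nonneg (sub_nonneg.mpr hin) pi_pos.le) hn.le) (sub_le_self π hstep.le) ?_
    have hangle : (n - i) * π / n = π - 2 * i * (π / (2 * n)) := by
      field_simp
    rw [hangle]
    nlinarith
  rw [cos_pi_sub] at hcos
  exact div_pos (mul_pos ha (by linarith)) (by linarith [cos_pi_div_two_mul_nonneg n])

theorem strictMonoOn_update_chebPt (n : ℕ) {a : ℝ} (ha : 0 < a) :
    StrictMonoOn (Function.update (chebPt n a) 0 0) (Set.Iic n) := by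
  intro i _ k hk hik
  rw [Function.update_of_ne (by omega : k ≠ 0)]
  rcases i.eq_zero_or_pos with rfl | hi0
  · rw [Function.update_self]
    exact chebPt_pos (Finset.mem_Icc.mpr ⟨hik, hk⟩) ha
  · rw [Function.update_of_ne hi0.ne']
    exact chebPt_lt_chebPt hik hk ha

/-- The Chebyshev polynomial `T_n` in the affine coordinate sending `a` to `1` and `0` to
`-cos (π / (2n))`, the smallest root of `T_n`: it vanishes at `0` and equioscillates at the points
`chebPt n a i`. -/
noncomputable def extremalPoly (n : ℕ) (a : ℝ) : ℝ[X] :=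
  (Chebyshev.T ℝ n).comp (C ((1 + cos (π / (2 * n))) / a) * X - C (cos (π / (2 * n))))

theorem eval_extremalPoly (n : ℕ) (a x : ℝ) :
    (extremalPoly n a).eval x =
      (Chebyshev.T ℝ n).eval ((1 + cos (π / (2 * n))) / a * x - cos (π / (2 * n))) := by
  simp only [extremalPoly, eval_comp, eval_sub, eval_mul, eval_C, eval_X]

theorem natDegree_extremalPoly_le (n : ℕ) (a : ℝ) : (extremalPoly n a).natDegree ≤ n := by
  have hlin : (C ((1 + cos (π / (2 * n))) / a) * X - C (cos (π / (2 * n)))).natDegree ≤ 1 := by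
    compute_degree
  simpa only [extremalPoly, natDegree_comp, Chebyshev.natDegree_T, Int.natAbs_natCast, mul_one]
    using Nat.mul_le_mul_left n hlin

theorem eval_zero_extremalPoly {n : ℕ} (hn : n ≠ 0) (a : ℝ) : (extremalPoly n a).eval 0 = 0 := by
  have hangle : ((n : ℤ) : ℝ) * (π - π / (2 * n)) = n * π - π / 2 := by
    push_cast
    field_simp
  rw [eval_extremalPoly, mul_zero, zero_sub, ← cos_pi_sub, Chebyshev.T_real_cos, hangle,
    cos_sub_pi_div_two, sin_nat_mul_pi]

theorem eval_extremalPoly_chebPt {n i : ℕ} (hi : i ≤ n) {a : ℝ} (ha : a ≠ 0) :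
    (extremalPoly n a).eval (chebPt n a i) = (-1) ^ (n - i) := by
  have hc : 1 + cos (π / (2 * n)) ≠ 0 := by linarith [cos_pi_div_two_mul_nonneg n]
  have hcoord : (1 + cos (π / (2 * n))) / a * chebPt n a i - cos (π / (2 * n)) =
      Chebyshev.node n (n - i) := by
    rw [chebPt_eq_node hi]
    field_simp
    ring
  rw [eval_extremalPoly, hcoord, Chebyshev.eval_T_real_node (Finset.mem_Iic.mpr (Nat.sub_le n i))]

theorem abs_eval_extremalPoly_le_one (n : ℕ) {a x : ℝ} (hx : x ∈ Set.Icc 0 a) :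
    |(extremalPoly n a).eval x| ≤ 1 := by
  have hc := cos_pi_div_two_mul_nonneg n
  have hc1 := cos_le_one (π / (2 * n))
  have hfrac : x / a ≤ 1 := div_le_one_of_le₀ hx.2 (hx.1.trans hx.2)
  have hfrac0 : 0 ≤ x / a := div_nonneg hx.1 (hx.1.trans hx.2)
  rw [eval_extremalPoly, div_mul_eq_mul_div, mul_div_assoc]
  refine Chebyshev.abs_eval_T_real_le_one n (abs_le.mpr ⟨?_, ?_⟩) <;> nlinarith

end ChebyshevPoints

section Elfving

variable {ι d K : Type*} [Fintype d] [Field K] [LinearOrder K] [IsStrictOrderedRing K]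

theorem sum_smul_vecMulVec_mulVec {R : Type*} [CommSemiring R] (S : Finset ι) (w : ι → R)
    (x : ι → d → R) (v : d → R) :
    (∑ i ∈ S, w i • vecMulVec (x i) (x i)) *ᵥ v = ∑ i ∈ S, (w i * (x i ⬝ᵥ v)) • x i := by
  rw [sum_mulVec]
  refine Finset.sum_congr rfl fun i _ => ?_
  rw [smul_mulVec, vecMulVec_mulVec, op_smul_eq_smul, smul_smul]

theorem sq_dotProduct_le_dotProduct_of_mulVec_eq {S : Finset ι} {w : ι → K} {x : ι → d → K}
    (hw : ∀ i ∈ S, 0 ≤ w i) (hsum : ∑ i ∈ S, w i = 1) {t : d → K}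
    (ht : ∀ i ∈ S, (x i ⬝ᵥ t) ^ 2 ≤ 1) {c v : d → K}
    (hv : (∑ i ∈ S, w i • vecMulVec (x i) (x i)) *ᵥ v = c) : (c ⬝ᵥ t) ^ 2 ≤ c ⬝ᵥ v := by
  have hdot : ∀ u, c ⬝ᵥ u = ∑ i ∈ S, w i * (x i ⬝ᵥ v) * (x i ⬝ᵥ u) := fun u => by
    rw [← hv, sum_smul_vecMulVec_mulVec, sum_dotProduct]
    exact Finset.sum_congr rfl fun i _ => by rw [smul_dotProduct, smul_eq_mul]
  calc (c ⬝ᵥ t) ^ 2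
      ≤ (∑ i ∈ S, w i * (x i ⬝ᵥ v) ^ 2) * ∑ i ∈ S, w i * (x i ⬝ᵥ t) ^ 2 := by
        rw [hdot]
        refine Finset.sum_sq_le_sum_mul_sum_of_sq_le_mul S
          (fun i hi => mul_nonneg (hw i hi) (sq_nonneg _))
          (fun i hi => mul_nonneg (hw i hi) (sq_nonneg _)) fun i _ => le_of_eq (by ring)
    _ = (c ⬝ᵥ v) * ∑ i ∈ S, w i * (x i ⬝ᵥ t) ^ 2 := by
        rw [hdot v]
        exact congrArg (· * _) (Finset.sum_congr rfl fun i _ => by ring)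
    _ ≤ c ⬝ᵥ v := by
        refine mul_le_of_le_one_right ?_ ?_
        · rw [hdot]
          exact Finset.sum_nonneg fun i hi => by
            rw [mul_assoc]
            exact mul_nonneg (hw i hi) (mul_self_nonneg _)
        · rw [← hsum]
          exact Finset.sum_le_sum fun i hi => mul_le_of_le_one_right (hw i hi) (ht i hi)

variable {S : Finset ι} {l : ι → K} {x : ι → d → K} {t c : d → K}

theorem dotProduct_eq_sum_abs_of_dotProduct_eq_sign (hc : ∑ i ∈ S, l i • x i = c)
    (ht : ∀ i ∈ S, x i ⬝ᵥ t = SignType.sign (l i)) : c ⬝ᵥ t = ∑ i ∈ S, |l i| := by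
  rw [← hc, sum_dotProduct]
  exact Finset.sum_congr rfl fun i hi => by
    rw [smul_dotProduct, ht i hi, smul_eq_mul, self_mul_sign]

theorem sum_abs_div_smul_vecMulVec_mulVec_eq (hc : ∑ i ∈ S, l i • x i = c)
    (ht : ∀ i ∈ S, x i ⬝ᵥ t = SignType.sign (l i)) :
    (∑ i ∈ S, (|l i| / ∑ k ∈ S, |l k|) • vecMulVec (x i) (x i)) *ᵥ ((∑ k ∈ S, |l k|) • t) = c := by
  rw [sum_smul_vecMulVec_mulVec, ← hc]
  refine Finset.sum_congr rfl fun i hi => ?_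
  have hzero : ∑ k ∈ S, |l k| = 0 → |l i| = 0 := fun h =>
    (Finset.sum_eq_zero_iff_of_nonneg fun k _ => abs_nonneg (l k)).mp h i hi
  rw [dotProduct_smul, ht i hi, smul_eq_mul, ← mul_assoc, div_mul_cancel_of_imp hzero, mul_comm,
    sign_mul_abs]

end Elfving

section SlopeOptimality

open Polynomial

theorem modelVec_dotProduct_coeff {n : ℕ} {p : ℝ[X]} (hp : p.natDegree ≤ n) (hp0 : p.eval 0 = 0)
    (x : ℝ) : modelVec n x ⬝ᵥ (fun i : Fin n => p.coeff (i.1 + 1)) = p.eval x := by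
  rw [← coeff_zero_eq_eval_zero] at hp0
  rw [eval_eq_sum_range' (Nat.lt_succ_of_le hp), Finset.sum_range_succ', Finset.sum_range, hp0,
    zero_mul, add_zero]
  exact Finset.sum_congr rfl fun i _ => mul_comm _ _

variable {n : ℕ} {s : ℕ → ℝ} {p : ℝ[X]} {z : ℝ}

theorem sq_slopeH_le_dotProduct (hs : Set.InjOn (Function.update s 0 0) (Set.Iic n))
    (hp : p.natDegree ≤ n) (hp0 : p.eval 0 = 0)
    (hsign : ∀ i ∈ Finset.Icc 1 n, p.eval (s i) = SignType.sign (deriv (Lbar n s i) z)) {a : ℝ}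
    (hbound : ∀ x ∈ Set.Icc 0 a, |p.eval x| ≤ 1) (η : Design n a) {v : Fin n → ℝ}
    (hv : infoMatrix η *ᵥ v = fun i : Fin n => ((i.1 : ℝ) + 1) * z ^ i.1) :
    slopeH n s z ^ 2 ≤ (fun i : Fin n => ((i.1 : ℝ) + 1) * z ^ i.1) ⬝ᵥ v := by
  rw [slopeH, ← dotProduct_eq_sum_abs_of_dotProduct_eq_sign (sum_deriv_Lbar_smul_modelVec hs z)
    fun i hi => (modelVec_dotProduct_coeff hp hp0 (s i)).trans (hsign i hi)]
  refine sq_dotProduct_le_dotProduct_of_mulVec_eq (fun i _ => η.wts_nonneg i) η.wts_sum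
    (fun i _ => ?_) hv
  rw [modelVec_dotProduct_coeff hp hp0, sq_le_one_iff_abs_le_one]
  exact hbound _ (η.pts_mem i)

theorem exists_mulVec_eq_and_dotProduct_eq_sq_slopeH
    (hs : Set.InjOn (Function.update s 0 0) (Set.Iic n)) (hp : p.natDegree ≤ n)
    (hp0 : p.eval 0 = 0)
    (hsign : ∀ i ∈ Finset.Icc 1 n, p.eval (s i) = SignType.sign (deriv (Lbar n s i) z)) :
    ∃ v : Fin n → ℝ,
      (∑ i ∈ Finset.Icc 1 n,
        slopeWeight n s z i • vecMulVec (modelVec n (s i)) (modelVec n (s i))) *ᵥ v =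
          (fun i : Fin n => ((i.1 : ℝ) + 1) * z ^ i.1) ∧
      (fun i : Fin n => ((i.1 : ℝ) + 1) * z ^ i.1) ⬝ᵥ v = slopeH n s z ^ 2 := by
  have hc := sum_deriv_Lbar_smul_modelVec hs z
  have ht : ∀ i ∈ Finset.Icc 1 n, modelVec n (s i) ⬝ᵥ (fun k : Fin n => p.coeff (k.1 + 1)) =
      SignType.sign (deriv (Lbar n s i) z) := fun i hi =>
    (modelVec_dotProduct_coeff hp hp0 (s i)).trans (hsign i hi)
  refine ⟨slopeH n s z • fun k : Fin n => p.coeff (k.1 + 1),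
    sum_abs_div_smul_vecMulVec_mulVec_eq hc ht, ?_⟩
  rw [dotProduct_smul, dotProduct_eq_sum_abs_of_dotProduct_eq_sign hc ht, smul_eq_mul, sq, slopeH]

end SlopeOptimality

/-- **Main theorem, positive direction.** For `z ∈ ⋃_{j=1}^n A_j`, the design supported
at the Chebyshev-type points `s_1, …, s_n` with weights `ω_i(z)` is `c`-optimal for
`c = f′(z) = (1, 2z, …, n z^{n−1})ᵀ`, with optimal value `h(z)²`. -/
theorem stmt_15 (n : ℕ) (hn : 2 ≤ n) (a : ℝ) (ha : 0 < a)
    (ω : ℕ → ℕ → ℝ)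
    (hωmono : ∀ i ∈ Finset.Icc 1 n,
      ∀ k l, 1 ≤ k → k < l → l ≤ n - 1 → ω i k < ω i l)
    (hωroot : ∀ i ∈ Finset.Icc 1 n, ∀ x : ℝ,
      deriv (Lbar n (chebPt n a) i) x = 0 ↔ ∃ k ∈ Finset.Icc 1 (n - 1), x = ω i k)
    (z : ℝ)
    (hz : ∃ j ∈ Finset.Icc 1 n, (1 < j → ω 1 (j - 1) < z) ∧ (j < n → z < ω n j)) :
    (∀ (η : Design n a) (v : Fin n → ℝ),
      (infoMatrix η).mulVec v = (fun i : Fin n => ((i.1 : ℝ) + 1) * z ^ (i.1)) →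
      slopeH n (chebPt n a) z ^ 2 ≤ (fun i : Fin n => ((i.1 : ℝ) + 1) * z ^ (i.1)) ⬝ᵥ v) ∧
    (∃ v : Fin n → ℝ,
      (∑ i ∈ Finset.Icc 1 n, slopeWeight n (chebPt n a) z i •
          Matrix.vecMulVec (modelVec n (chebPt n a i)) (modelVec n (chebPt n a i))).mulVec v
        = (fun i : Fin n => ((i.1 : ℝ) + 1) * z ^ (i.1)) ∧
      (fun i : Fin n => ((i.1 : ℝ) + 1) * z ^ (i.1)) ⬝ᵥ v = slopeH n (chebPt n a) z ^ 2) := by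
  obtain ⟨j, hj, hleft, hright⟩ := hz
  have hs := strictMonoOn_update_chebPt n ha
  have hω : ∀ i ∈ Finset.Icc 1 n, EnumeratesRoots (Lagrange.nodal ((Finset.Iic n).erase i)
      (Function.update (chebPt n a) 0 0)).derivative (ω i) := fun i hi =>
    EnumeratesRoots.of_deriv_Lbar_eq_zero hs.injOn hi
      (fun k hk l hl hkl => hωmono i hi k l hk.1 hkl hl.2)
      fun k hk => (hωroot i hi _).mpr ⟨k, hk, rfl⟩
  set p := Polynomial.C ((-1) ^ (n - j)) * extremalPoly n a
  have hp : p.natDegree ≤ n :=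
    (Polynomial.natDegree_C_mul_le _ _).trans (natDegree_extremalPoly_le n a)
  have heval : ∀ x, p.eval x = (-1) ^ (n - j) * (extremalPoly n a).eval x :=
    fun x => Polynomial.eval_C_mul
  have hp0 : p.eval 0 = 0 := by rw [heval, eval_zero_extremalPoly (by omega), mul_zero]
  have hsign : ∀ i ∈ Finset.Icc 1 n,
      p.eval (chebPt n a i) = SignType.sign (deriv (Lbar n (chebPt n a) i) z) := fun i hi => by
    rw [heval, eval_extremalPoly_chebPt (Finset.mem_Icc.mp hi).2 ha.ne', ← pow_add,
      sign_deriv_Lbar hn hs (hω n (Finset.right_mem_Icc.mpr (by omega)))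
        (hω 1 (Finset.left_mem_Icc.mpr (by omega))) hj hleft hright hi]
  have hbound : ∀ x ∈ Set.Icc 0 a, |p.eval x| ≤ 1 := fun x hx => by
    rw [heval, abs_mul, abs_neg_one_pow, one_mul]
    exact abs_eval_extremalPoly_le_one n hx
  exact ⟨fun η v hv => sq_slopeH_le_dotProduct hs.injOn hp hp0 hsign hbound η hv,
    exists_mulVec_eq_and_dotProduct_eq_sq_slopeH hs.injOn hp hp0 hsign⟩
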